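/- arXiv:1610.04905 — 5 statements merged into one kernel-verified Lean document; each statement's English description precedes it below -/
import Mathlib

section
/- Fix integers n ≥ 0, N ≥ 0 and t ≥ 0, and let y be a real-valued function on the subsets of {1,…,n}. If y(∅) = 1 and N·y(S) = Σ_{j=1}^{n} y(S ∪ {j}) for every subset S ⊆ {1,…,n} with |S| ≤ 2t − 1 (the sum ranges over all j ∈ {1,…,n}, including j ∈ S, in which case S ∪ {j} = S), then Σ_{S ⊆ {1,…,n}, |S| = i} y(S) = C(N,i) for every integer i with 0 ≤ i ≤ 2t. -/
/-!
Write `σ i` for the sum of `y` over the `i`-element subsets. Summing the hypothesis over all `S`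
with `|S| = i` and splitting the inner sum into `j ∈ S` (each term is `y S`) and `j ∉ S` gives
`N σ i = i σ i + (i + 1) σ (i + 1)`, because each `(i + 1)`-set `T` arises as `S ∪ {j}` with `j ∉ S`
in exactly `i + 1` ways (`sum_insert_compl`). The binomial coefficients satisfy the same recurrence
`(i + 1) C(N, i + 1) = (N - i) C(N, i)` (`cast_choose_succ`), and both sequences start at `1`.
-/

/-- Double counting of the pairs `(S, j)` with `|S| = i` and `j ∉ S`, via `(S, j) ↦ (S ∪ {j}, j)`. -/
lemma sum_insert_compl {n : ℕ} (y : Finset (Fin n) → ℝ) (i : ℕ) :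
    ∑ S ∈ Finset.univ.filter (fun S : Finset (Fin n) => S.card = i), ∑ j ∈ Sᶜ, y (insert j S)
      = ((i : ℝ) + 1) *
        ∑ T ∈ Finset.univ.filter (fun T : Finset (Fin n) => T.card = i + 1), y T := by
  have h : ((i : ℝ) + 1) *
        ∑ T ∈ Finset.univ.filter (fun T : Finset (Fin n) => T.card = i + 1), y T
      = ∑ T ∈ Finset.univ.filter (fun T : Finset (Fin n) => T.card = i + 1), ∑ _j ∈ T, y T := by
    rw [Finset.mul_sum]
    refine Finset.sum_congr rfl fun T hT => ?_
    rw [Finset.sum_const, (Finset.mem_filter.mp hT).2, nsmul_eq_mul]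
    push_cast
    rfl
  rw [h, Finset.sum_sigma', Finset.sum_sigma']
  refine Finset.sum_bij' (fun p _ => ⟨insert p.2 p.1, p.2⟩) (fun p _ => ⟨p.1.erase p.2, p.2⟩)
    ?_ ?_ ?_ ?_ ?_
  · rintro ⟨S, j⟩ hp
    simp only [Finset.mem_sigma, Finset.mem_filter, Finset.mem_univ, true_and,
      Finset.mem_compl] at hp ⊢
    exact ⟨by rw [Finset.card_insert_of_notMem hp.2, hp.1], Finset.mem_insert_self _ _⟩
  · rintro ⟨T, j⟩ hp
    simp only [Finset.mem_sigma, Finset.mem_filter, Finset.mem_univ, true_and,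
      Finset.mem_compl] at hp ⊢
    exact ⟨by rw [Finset.card_erase_of_mem hp.2, hp.1]; rfl, Finset.notMem_erase _ _⟩
  · rintro ⟨S, j⟩ hp
    simp only [Finset.mem_sigma, Finset.mem_compl] at hp
    simp only [Finset.erase_insert hp.2]
  · rintro ⟨T, j⟩ hp
    simp only [Finset.mem_sigma] at hp
    simp only [Finset.insert_erase hp.2]
  · rintro ⟨S, j⟩ _
    rfl

/-- The subtraction is in `ℝ`, so the case `N < i`, where both sides vanish, is included. -/
lemma cast_choose_succ (N i : ℕ) :
    ((i : ℝ) + 1) * (N.choose (i + 1) : ℝ) = ((N : ℝ) - i) * (N.choose i : ℝ) := by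
  rcases le_or_gt i N with h | h
  · have := congrArg (Nat.cast : ℕ → ℝ) (Nat.choose_succ_right_eq N i)
    push_cast [Nat.cast_sub h] at this
    linarith
  · simp [Nat.choose_eq_zero_of_lt h, Nat.choose_eq_zero_of_lt (Nat.lt_succ_of_lt h)]

/-- If `y ∅ = 1` and `N · y S = ∑_{j=1}^n y (S ∪ {j})` for every
`S ⊆ {1,…,n}` with `|S| ≤ 2t - 1`, then `∑_{|S| = i} y S = C(N,i)` for `0 ≤ i ≤ 2t`. -/
theorem stmt_0 (n N t : ℕ) (y : Finset (Fin n) → ℝ)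
    (h0 : y ∅ = 1)
    (hrec : ∀ S : Finset (Fin n), S.card + 1 ≤ 2 * t →
      (N : ℝ) * y S = ∑ j : Fin n, y (insert j S)) :
    ∀ i : ℕ, i ≤ 2 * t →
      ∑ S ∈ Finset.univ.filter (fun S : Finset (Fin n) => S.card = i), y S
        = (N.choose i : ℝ) := by
  intro i
  induction i with
  | zero =>
    intro _
    simp [Finset.card_eq_zero, Finset.filter_eq', h0]
  | succ i ih =>
    intro hi
    have key : (N : ℝ) * ∑ S ∈ Finset.univ.filter (fun S : Finset (Fin n) => S.card = i), y S
        = (i : ℝ) * ∑ S ∈ Finset.univ.filter (fun S : Finset (Fin n) => S.card = i), y S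
          + ∑ S ∈ Finset.univ.filter (fun S : Finset (Fin n) => S.card = i),
              ∑ j ∈ Sᶜ, y (insert j S) := by
      rw [Finset.mul_sum, Finset.mul_sum, ← Finset.sum_add_distrib]
      refine Finset.sum_congr rfl fun S hS => ?_
      have hc : S.card = i := (Finset.mem_filter.mp hS).2
      have hin : ∑ j ∈ S, y (insert j S) = (i : ℝ) * y S := by
        rw [Finset.sum_congr rfl fun j hj => by rw [Finset.insert_eq_of_mem hj],
          Finset.sum_const, hc, nsmul_eq_mul]
      rw [hrec S (by omega), ← Finset.sum_add_sum_compl S, hin]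
    rw [sum_insert_compl, ih (by omega)] at key
    have hpos : (i : ℝ) + 1 ≠ 0 := by positivity
    refine mul_left_cancel₀ hpos ?_
    rw [cast_choose_succ]
    linarith
end

section
/- Let V be a finite set, N an integer with 1 ≤ N ≤ |V|, and f : Finset V → ℝ. Define the ground state energy E = min over all S ⊆ V with |S| = N of Σ_{T ⊆ S, |T| = 2} f(T). Call λ : Finset V → ℝ feasible if: λ(S) = 0 whenever |S| > 2N; λ(S) ≥ 0 for all S ⊆ V; Σ_{S ⊆ V, |S| = i} λ(S) = C(N,i) for every integer 0 ≤ i ≤ 2N; and the N-th moment matrix of λ is positive semidefinite. Then the set of feasible λ is nonempty, the infimum of Σ_{S ⊆ V, |S| = 2} f(S)·λ(S) over all feasible λ is attained, and this minimum equals E. -/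
/-!
The indicator `T ↦ [T ⊆ S₀]` of the subsets of an optimal `S₀` is feasible (its moment matrix is a
rank-one Gram matrix) and has objective value `E`.

Conversely, let `lam` be feasible. As `C(N,i) = 0` for `i > N` and `lam ≥ 0`, `lam` vanishes above
cardinality `N`. Hence the block of the moment matrix indexed by the `N`-sets is diagonal with
entries `lam W`, and the entry at `(J, W)` is `[J ⊆ W] lam W`. Taking the Schur complement of this
block leaves a positive semidefinite matrix with `(J, J')` entry
`lam (J ∪ J') - ∑_{|W| = N, J ∪ J' ⊆ W} lam W`. Its `(∅, ∅)` entry is `1 - 1 = 0`, so its whole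
`∅`-row vanishes, that is, `lam S = ∑_{|W| = N, S ⊆ W} lam W` (`lam_eq_sum`). Thus `lam` is the
moment sequence of a probability distribution on the `N`-sets, and the objective is an average of
energies of `N`-sets, each at least `E`. In `lam_eq_sum` the Schur complement appears through
explicit test vectors supported on `∅`, `S` and the `N`-sets.
-/

open Finset

/-- The `t`-th moment matrix of `lam : Finset V → ℝ`, indexed by the subsets of
cardinality at most `t`, with `(J,J')` entry `lam (J ∪ J')`. -/
def momentMatrix {V : Type*} [DecidableEq V] (t : ℕ) (lam : Finset V → ℝ) :
    Matrix {J : Finset V // J.card ≤ t} {J : Finset V // J.card ≤ t} ℝ :=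
  fun J J' => lam (J.1 ∪ J'.1)

section

variable {V : Type*} [DecidableEq V]

/-- The moments of the point mass at `S` have a positive semidefinite moment matrix. -/
lemma posSemidef_indicator [Fintype V] (N : ℕ) (S : Finset V) :
    (momentMatrix N (fun T : Finset V => if T ⊆ S then (1 : ℝ) else 0)).PosSemidef := by
  have h : momentMatrix N (fun T : Finset V => if T ⊆ S then (1 : ℝ) else 0) =
      Matrix.vecMulVec (fun J : {J : Finset V // J.card ≤ N} => if J.1 ⊆ S then (1 : ℝ) else 0)
        (star fun J : {J : Finset V // J.card ≤ N} => if J.1 ⊆ S then (1 : ℝ) else 0) := by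
    ext J J'
    by_cases h1 : J.1 ⊆ S <;> by_cases h2 : J'.1 ⊆ S <;>
      simp [momentMatrix, Matrix.vecMulVec_apply, Finset.union_subset_iff, h1, h2]
  rw [h]
  exact Matrix.posSemidef_vecMulVec_self_star _

/-- The quadratic form of the moment matrix is nonnegative on any finite family of index sets,
which may contain repetitions. -/
lemma quadratic_nonneg {N : ℕ} {lam : Finset V → ℝ} (hM : (momentMatrix N lam).PosSemidef)
    {ι : Type*} [Fintype ι] (g : ι → Finset V) (hg : ∀ i, (g i).card ≤ N) (c : ι → ℝ) :
    0 ≤ ∑ i, ∑ j, c i * c j * lam (g i ∪ g j) := by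
  have h := (hM.submatrix (fun i : ι => (⟨g i, hg i⟩ : {J : Finset V // J.card ≤ N}))
    ).dotProduct_mulVec_nonneg c
  refine h.trans_eq ?_
  simp only [dotProduct, Matrix.mulVec, Finset.mul_sum, Matrix.submatrix_apply, momentMatrix,
    Pi.star_apply, star_trivial]
  exact Finset.sum_congr rfl fun i _ => Finset.sum_congr rfl fun j _ => by ring

/-- A moment sequence of order `N` with total mass one that vanishes above cardinality `N` is
generated by its values on the `N`-sets, provided these sum to one. -/
lemma lam_eq_sum [Fintype V] {N : ℕ} {lam : Finset V → ℝ}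
    (hM : (momentMatrix N lam).PosSemidef)
    (hbig : ∀ S : Finset V, N < S.card → lam S = 0) (hempty : lam ∅ = 1)
    (htop : ∑ W : {W : Finset V // W.card = N}, lam W.1 = 1) (S : Finset V) (hS : S.card ≤ N) :
    lam S = ∑ W : {W : Finset V // W.card = N}, if S ⊆ W.1 then lam W.1 else 0 := by
  have hJW : ∀ (J : Finset V) (W : {W : Finset V // W.card = N}),
      lam (J ∪ W.1) = if J ⊆ W.1 then lam W.1 else 0 := by
    intro J W
    split_ifs with h
    · rw [Finset.union_eq_right.2 h]
    · apply hbig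
      refine W.2.symm.trans_lt (Finset.card_lt_card ?_)
      refine ⟨Finset.subset_union_right, fun h' => h ?_⟩
      exact Finset.subset_union_left.trans h'
  have hWW : ∀ W W' : {W : Finset V // W.card = N},
      lam (W.1 ∪ W'.1) = if W = W' then lam W.1 else 0 := by
    intro W W'
    rw [hJW]
    have : W.1 ⊆ W'.1 ↔ W = W' := by
      constructor
      · intro h
        exact Subtype.ext (Finset.eq_of_subset_of_card_le h (by rw [W.2, W'.2]))
      · rintro rfl
        exact subset_rfl
    simp only [this]
    split_ifs with h
    · rw [h]
    · rfl
  set Q : ℝ := ∑ W : {W : Finset V // W.card = N}, if S ⊆ W.1 then lam W.1 else 0 with hQ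
  -- The test vector with entries `a` at `∅` and `b` at `S`, completed on the `N`-sets so as to
  -- minimise the quadratic form.
  have key : ∀ a b : ℝ, 0 ≤ (2 * a * b + b ^ 2) * (lam S - Q) := by
    intro a b
    let d : {W : Finset V // W.card = N} → ℝ := fun W => if S ⊆ W.1 then 1 else 0
    have h := quadratic_nonneg hM
      (Sum.elim (fun t : Bool => if t then S else ∅)
        (fun W : {W : Finset V // W.card = N} => W.1))
      (by
        rintro (t | W)
        · cases t <;> simp [hS]
        · exact W.2.le)
      (Sum.elim (fun t : Bool => if t then b else a) (fun W => -(a + b * d W)))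
    simp only [Fintype.sum_sum_type, Fintype.sum_bool, Sum.elim_inl, Sum.elim_inr, if_true,
      Bool.false_eq_true, if_false, Finset.union_self, Finset.empty_union, Finset.union_empty,
      hempty, hWW, Finset.sum_add_distrib, mul_ite, mul_zero, Finset.sum_ite_eq,
      Finset.mem_univ] at h
    have e1 : ∀ W : {W : Finset V // W.card = N}, lam (S ∪ W.1) = d W * lam W.1 := by
      intro W
      rw [hJW]
      simp [d]
    have e1' : ∀ W : {W : Finset V // W.card = N}, lam (W.1 ∪ S) = d W * lam W.1 := by
      intro W
      rw [Finset.union_comm, e1]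
    have hQ' : Q = ∑ W, d W * lam W.1 := by
      rw [hQ]
      exact Finset.sum_congr rfl fun W _ => by simp [d]
    have hdd : ∀ W, d W * d W = d W := by
      intro W
      simp [d]
    simp only [e1, e1'] at h
    have s1 : ∑ W, b * -(a + b * d W) * (d W * lam W.1) = -(a * b + b ^ 2) * Q := by
      rw [hQ', Finset.mul_sum]
      exact Finset.sum_congr rfl fun W _ => by linear_combination (-b ^ 2 * lam W.1) * hdd W
    have s1' : ∑ W, -(a + b * d W) * b * (d W * lam W.1) = -(a * b + b ^ 2) * Q := by
      rw [← s1]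
      exact Finset.sum_congr rfl fun W _ => by ring
    have s2 : ∑ W, a * -(a + b * d W) * lam W.1 = -a ^ 2 - a * b * Q := by
      have : -a ^ 2 - a * b * Q = -a ^ 2 * (∑ W : {W : Finset V // W.card = N}, lam W.1)
          - a * b * Q := by rw [htop]; ring
      rw [this, hQ', Finset.mul_sum, Finset.mul_sum, ← Finset.sum_sub_distrib]
      exact Finset.sum_congr rfl fun W _ => by ring
    have s2' : ∑ W, -(a + b * d W) * a * lam W.1 = -a ^ 2 - a * b * Q := by
      rw [← s2]
      exact Finset.sum_congr rfl fun W _ => by ring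
    have s3 : ∑ W, -(a + b * d W) * -(a + b * d W) * lam W.1
        = a ^ 2 + (2 * a * b + b ^ 2) * Q := by
      have : a ^ 2 + (2 * a * b + b ^ 2) * Q
          = a ^ 2 * (∑ W : {W : Finset V // W.card = N}, lam W.1)
          + (2 * a * b + b ^ 2) * Q := by rw [htop]; ring
      rw [this, hQ', Finset.mul_sum, Finset.mul_sum, ← Finset.sum_add_distrib]
      exact Finset.sum_congr rfl fun W _ => by linear_combination (b ^ 2 * lam W.1) * hdd W
    rw [s1, s1', s2, s2', s3] at h
    linarith
  have h1 := key 0 1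
  have h2 := key (-1) 1
  linarith

end

/-- For a finite set `V`, `1 ≤ N ≤ |V|` and `f : Finset V → ℝ`, with
`E` the minimum of `∑_{T ⊆ S, |T| = 2} f T` over `S ⊆ V` with `|S| = N`, the
set of feasible `lam` is nonempty, the infimum of the objective over feasible `lam`
is attained, and this minimum equals `E`. -/
theorem stmt_1 {V : Type*} [Fintype V] [DecidableEq V] (N : ℕ)
    (hN1 : 1 ≤ N) (hN2 : N ≤ Fintype.card V) (f : Finset V → ℝ) (E : ℝ)
    (hE : IsLeast {e : ℝ | ∃ S : Finset V, S.card = N ∧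
      e = ∑ T ∈ S.powerset.filter (fun T => T.card = 2), f T} E) :
    IsLeast {e : ℝ | ∃ lam : Finset V → ℝ,
      (∀ S : Finset V, 2 * N < S.card → lam S = 0) ∧
      (∀ S : Finset V, 0 ≤ lam S) ∧
      (∀ i : ℕ, i ≤ 2 * N →
        ∑ S ∈ Finset.univ.filter (fun S : Finset V => S.card = i), lam S
          = (N.choose i : ℝ)) ∧
      (momentMatrix N lam).PosSemidef ∧
      e = ∑ S ∈ Finset.univ.filter (fun S : Finset V => S.card = 2), f S * lam S} E := by
  obtain ⟨⟨S₀, hS₀, hES₀⟩, hmin⟩ := hE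
  constructor
  · refine ⟨fun T => if T ⊆ S₀ then 1 else 0, ?_, ?_, ?_, posSemidef_indicator N S₀, ?_⟩
    · intro S hS
      refine if_neg fun h => ?_
      have := Finset.card_le_card h
      omega
    · intro S
      positivity
    · intro i _
      rw [← hS₀, ← Finset.card_powersetCard, Finset.sum_boole, Finset.filter_filter]
      congr 2
      ext T
      simp [Finset.mem_powersetCard, and_comm]
    · rw [hES₀]
      simp only [mul_ite, mul_one, mul_zero]
      rw [← Finset.sum_filter, Finset.filter_filter]
      refine Finset.sum_congr ?_ fun _ _ => rfl
      ext T
      simp [and_comm]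
  · rintro e ⟨lam, hz, hpos, hsum, hM, rfl⟩
    have hbig : ∀ S : Finset V, N < S.card → lam S = 0 := by
      intro S hS
      by_cases h : 2 * N < S.card
      · exact hz S h
      · have hs := hsum S.card (by omega)
        rw [Nat.choose_eq_zero_of_lt hS, Nat.cast_zero,
          Finset.sum_eq_zero_iff_of_nonneg fun T _ => hpos T] at hs
        exact hs S (by simp)
    have hempty : lam ∅ = 1 := by
      have := hsum 0 (by omega)
      simpa [Finset.filter_eq'] using this
    have htop : ∑ W : {W : Finset V // W.card = N}, lam W.1 = 1 := by
      have := hsum N (by omega)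
      rw [Nat.choose_self, Nat.cast_one] at this
      rw [← this]
      exact (Finset.sum_subtype _ (by simp) _).symm
    have hrep : ∀ S : Finset V,
        lam S = ∑ W : {W : Finset V // W.card = N}, if S ⊆ W.1 then lam W.1 else 0 := by
      intro S
      by_cases hS : S.card ≤ N
      · exact lam_eq_sum hM hbig hempty htop S hS
      · rw [hbig S (by omega)]
        refine (Finset.sum_eq_zero fun W _ => if_neg fun h => hS ?_).symm
        exact (Finset.card_le_card h).trans_eq W.2
    calc E = ∑ W : {W : Finset V // W.card = N}, lam W.1 * E := by
          rw [← Finset.sum_mul, htop, one_mul]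
      _ ≤ ∑ W : {W : Finset V // W.card = N},
            lam W.1 * ∑ T ∈ W.1.powerset.filter (fun T => T.card = 2), f T :=
          Finset.sum_le_sum fun W _ =>
            mul_le_mul_of_nonneg_left (hmin ⟨W.1, W.2, rfl⟩) (hpos _)
      _ = ∑ W : {W : Finset V // W.card = N},
            ∑ S ∈ Finset.univ.filter (fun S : Finset V => S.card = 2),
              f S * (if S ⊆ W.1 then lam W.1 else 0) := by
          refine Finset.sum_congr rfl fun W _ => ?_
          simp only [mul_ite, mul_zero]
          rw [← Finset.sum_filter, Finset.filter_filter, Finset.mul_sum]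
          refine Finset.sum_congr ?_ fun _ _ => mul_comm _ _
          ext T
          simp [and_comm]
      _ = ∑ S ∈ Finset.univ.filter (fun S : Finset V => S.card = 2), f S * lam S := by
          rw [Finset.sum_comm]
          refine Finset.sum_congr rfl fun S _ => ?_
          rw [← Finset.mul_sum, ← hrep S]
end

section
/- Let V be a finite set and t ≥ 1 an integer. Let λ : Finset V → ℝ satisfy λ(S) = 0 whenever |S| > t, and suppose the t-th moment matrix of λ is positive semidefinite. Define σ : Finset V → ℝ by σ(R) = Σ_{S ⊆ V, R ⊆ S} (−1)^{|S ∖ R|} λ(S). Then λ(S) = Σ_{R ⊆ V, S ⊆ R} σ(R) for every S ⊆ V, σ(R) = 0 whenever |R| > t, and σ(R) ≥ 0 for every R ⊆ V. -/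
/-!
Möbius inversion on the Boolean lattice rests on the identity
`∑_{R ⊆ J ⊆ T} (-1)^{|J \ R|} = [R = T]` (`sum_interval_sign`); it yields `lam S = ∑_{R ⊇ S} σ R`,
while `σ R = 0` for `|R| > t` because every term of its defining sum vanishes.

For nonnegativity at `R`, test the moment matrix against the vector
`x J = [R ⊆ J] (-1)^{|J \ R|}`. Inverting, `lam (J ∪ J') = ∑_T σ T [J ⊆ T] [J' ⊆ T]`, so the
quadratic form is diagonalised: `xᵀ M x = ∑_T σ T (∑_{J ⊆ T} x J)²`. Since `σ` is supported on sets
of size at most `t`, the inner sum is only needed for `|T| ≤ t`, where the cardinality restriction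
on `J` is automatic and the sum is `[R = T]`. Hence `0 ≤ xᵀ M x = σ R`.
-/

open Finset

lemma neg_one_pow_card_sdiff {V : Type*} [DecidableEq V] {S R U : Finset V}
    (h1 : S ⊆ R) (h2 : R ⊆ U) :
    (-1 : ℝ) ^ (U \ R).card = (-1) ^ (U \ S).card * (-1) ^ (R \ S).card := by
  have e : (U \ S).card = (U \ R).card + (R \ S).card := by
    have := card_le_card h1
    have := card_le_card h2
    rw [card_sdiff_of_subset h1, card_sdiff_of_subset h2, card_sdiff_of_subset (h1.trans h2)]
    omega
  rw [e, pow_add, mul_assoc, ← mul_pow]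
  norm_num

/-- The Möbius function of the Boolean lattice: the signed sum over the interval `[R, T]` is
`1` if `R = T` and `0` otherwise (in particular when the interval is empty). -/
lemma sum_interval_sign {V : Type*} [Fintype V] [DecidableEq V] (R T : Finset V) :
    ∑ J : Finset V, (if R ⊆ J ∧ J ⊆ T then (-1 : ℝ) ^ (J \ R).card else 0)
      = if R = T then 1 else 0 := by
  rw [← Finset.sum_filter]
  by_cases h : R ⊆ T
  · have key : ∑ J ∈ univ.filter (fun J : Finset V => R ⊆ J ∧ J ⊆ T), (-1 : ℝ) ^ (J \ R).card
        = ∑ K ∈ (T \ R).powerset, (-1 : ℝ) ^ K.card := by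
      refine Finset.sum_bij' (fun J _ => J \ R) (fun K _ => K ∪ R) ?_ ?_ ?_ ?_ ?_
      · intro J hJ
        simp only [mem_filter, mem_univ, true_and, mem_powerset] at hJ ⊢
        exact sdiff_subset_sdiff hJ.2 le_rfl
      · intro K hK
        simp only [mem_filter, mem_univ, true_and, mem_powerset] at hK ⊢
        exact ⟨subset_union_right, union_subset (hK.trans sdiff_subset) h⟩
      · intro J hJ
        simp only [mem_filter, mem_univ, true_and] at hJ
        exact sdiff_union_of_subset hJ.1
      · intro K hK
        rw [mem_powerset] at hK
        ext a
        have := @hK a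
        simp only [mem_sdiff, mem_union] at this ⊢
        tauto
      · intro J _
        rfl
    rw [key]
    have h2 := congrArg (Int.cast : ℤ → ℝ) (Finset.sum_powerset_neg_one_pow_card (x := T \ R))
    push_cast at h2
    rw [h2]
    have : T \ R = ∅ ↔ R = T := by
      rw [sdiff_eq_empty_iff_subset]
      exact ⟨fun h' => Subset.antisymm h h', fun h' => h' ▸ Subset.rfl⟩
    simp only [this]
  · rw [if_neg (fun h' : R = T => h h'.subset), Finset.sum_eq_zero]
    intro J hJ
    simp only [mem_filter, mem_univ, true_and] at hJ
    exact absurd (hJ.1.trans hJ.2) h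

/-- Möbius inversion over supersets. -/
lemma moebius_superset {V : Type*} [Fintype V] [DecidableEq V] (lam σ : Finset V → ℝ)
    (hσ : ∀ R : Finset V,
      σ R = ∑ S ∈ Finset.univ.filter (fun S : Finset V => R ⊆ S),
        (-1 : ℝ) ^ (S \ R).card * lam S) (S : Finset V) :
    lam S = ∑ R ∈ Finset.univ.filter (fun R : Finset V => S ⊆ R), σ R := by
  symm
  calc ∑ R ∈ Finset.univ.filter (fun R : Finset V => S ⊆ R), σ R
      = ∑ R : Finset V, ∑ U : Finset V, (-1 : ℝ) ^ (U \ S).card * lam U *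
          (if S ⊆ R ∧ R ⊆ U then (-1 : ℝ) ^ (R \ S).card else 0) := by
        rw [Finset.sum_filter]
        refine Finset.sum_congr rfl fun R _ => ?_
        rw [hσ R, Finset.sum_filter]
        by_cases h : S ⊆ R
        · rw [if_pos h]
          refine Finset.sum_congr rfl fun U _ => ?_
          by_cases h' : R ⊆ U
          · rw [if_pos h', if_pos ⟨h, h'⟩, neg_one_pow_card_sdiff h h']
            ring
          · simp [h']
        · simp [h]
    _ = lam S := by
        rw [Finset.sum_comm]
        simp_rw [← Finset.mul_sum, sum_interval_sign]
        simp

/-- If `lam` vanishes on sets of cardinality `> t` and its `t`-th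
moment matrix is positive semidefinite, then with
`σ R = ∑_{S ⊇ R} (-1)^{|S \ R|} lam S` one has the Möbius inversion
`lam S = ∑_{R ⊇ S} σ R`, `σ R = 0` for `|R| > t`, and `σ R ≥ 0` for all `R`. -/
theorem stmt_2 {V : Type*} [Fintype V] [DecidableEq V] (t : ℕ) (ht : 1 ≤ t)
    (lam : Finset V → ℝ)
    (hsupp : ∀ S : Finset V, t < S.card → lam S = 0)
    (hpsd : (momentMatrix t lam).PosSemidef)
    (σ : Finset V → ℝ)
    (hσ : ∀ R : Finset V,
      σ R = ∑ S ∈ Finset.univ.filter (fun S : Finset V => R ⊆ S),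
        (-1 : ℝ) ^ (S \ R).card * lam S) :
    (∀ S : Finset V,
      lam S = ∑ R ∈ Finset.univ.filter (fun R : Finset V => S ⊆ R), σ R) ∧
    (∀ R : Finset V, t < R.card → σ R = 0) ∧
    (∀ R : Finset V, 0 ≤ σ R) := by
  have hinv := moebius_superset lam σ hσ
  have hzero : ∀ R : Finset V, t < R.card → σ R = 0 := by
    intro R hR
    rw [hσ R]
    refine Finset.sum_eq_zero fun S hS => ?_
    rw [hsupp S (hR.trans_le (card_le_card (mem_filter.1 hS).2)), mul_zero]
  refine ⟨hinv, hzero, fun R => ?_⟩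
  let x : {J : Finset V // J.card ≤ t} → ℝ :=
    fun J => if R ⊆ J.1 then (-1 : ℝ) ^ (J.1 \ R).card else 0
  have hquad := hpsd.dotProduct_mulVec_nonneg x
  have hdiag : star x ⬝ᵥ (momentMatrix t lam).mulVec x
      = ∑ T : Finset V, σ T *
        (∑ J : {J : Finset V // J.card ≤ t}, if J.1 ⊆ T then x J else 0) ^ 2 := by
    simp only [dotProduct, Matrix.mulVec, momentMatrix, Pi.star_apply, star_trivial]
    simp_rw [sq, Finset.sum_mul_sum, Finset.mul_sum]
    rw [Finset.sum_comm (s := (univ : Finset (Finset V)))]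
    refine Finset.sum_congr rfl fun J _ => ?_
    rw [Finset.sum_comm (s := (univ : Finset (Finset V)))]
    refine Finset.sum_congr rfl fun J' _ => ?_
    rw [hinv, Finset.sum_filter, Finset.sum_mul, Finset.mul_sum]
    refine Finset.sum_congr rfl fun T _ => ?_
    by_cases h : J.1 ⊆ T <;> by_cases h' : J'.1 ⊆ T <;> simp [union_subset_iff, h, h']
    ring
  have hterm : ∀ T : Finset V, σ T *
      (∑ J : {J : Finset V // J.card ≤ t}, if J.1 ⊆ T then x J else 0) ^ 2
        = if R = T then σ T else 0 := by
    intro T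
    by_cases hT : t < T.card
    · simp [hzero T hT]
    · have hsum : (∑ J : {J : Finset V // J.card ≤ t}, if J.1 ⊆ T then x J else 0)
          = if R = T then 1 else 0 := by
        rw [← sum_interval_sign R T]
        -- Subsets of `T` have at most `t` elements, so the bound on `|J|` may be dropped.
        have hsub := Finset.sum_subtype (F := inferInstance) (univ.filter fun J : Finset V => J.card ≤ t)
          (p := fun J => J.card ≤ t) (fun J => by simp)
          (fun J => if R ⊆ J ∧ J ⊆ T then (-1 : ℝ) ^ (J \ R).card else 0)
        rw [← Finset.sum_filter_of_ne (p := fun J : Finset V => J.card ≤ t), hsub]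
        · refine Finset.sum_congr rfl fun J _ => ?_
          by_cases h : R ⊆ J.1 <;> by_cases h' : J.1 ⊆ T <;> simp [x, h, h']
        · intro J _ hJ
          have h : R ⊆ J ∧ J ⊆ T := by
            by_contra h
            exact hJ (if_neg h)
          exact (card_le_card h.2).trans (not_lt.1 hT)
      rw [hsum]
      split_ifs <;> simp
  rw [hdiag, Finset.sum_congr rfl fun T _ => hterm T] at hquad
  simpa using hquad
end

section
/- Let V be a finite set and N an integer with 1 ≤ N ≤ |V|. Let F be the convex set of all λ : Finset V → ℝ such that: λ(S) = 0 whenever |S| > 2N; λ(S) ≥ 0 for all S ⊆ V; Σ_{S ⊆ V, |S| = i} λ(S) = C(N,i) for every integer 0 ≤ i ≤ 2N; and the N-th moment matrix of λ is positive semidefinite. Then λ ∈ F is an extreme point of F (i.e., whenever λ = ½(λ₁ + λ₂) with λ₁, λ₂ ∈ F one has λ₁ = λ₂) if and only if there exists S₀ ⊆ V with |S₀| = N such that λ(R) = 1 for every R ⊆ S₀ and λ(R) = 0 for every R ⊆ V with R ⊄ S₀. -/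
/-!
Since the values `lam S` with `|S| = i` are nonnegative and sum to `C(N, i) = 0` for `N < i ≤ 2N`,
every feasible `lam` vanishes on sets with more than `N` elements. Möbius inversion on the
subset lattice writes `lam S = ∑_{T ⊇ S} μ T`, with `μ` supported on sets of at most `N` elements,
and the quadratic form of the moment matrix becomes `x ↦ ∑_T μ T (∑_{J ⊆ T} x J)²`
(`sum_sum_upSum`). Testing it on `x J = (-1)^|J|` for `J ⊇ T` (and `0` otherwise) isolates `μ T`,
so positive semidefiniteness yields `μ ≥ 0`. The cardinality conditions read
`∑_T μ T C(|T|, i) = C(N, i)`; comparing `i = 0` with `i = N` shows that `μ` is a probability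
weight on the `N`-subsets (`exists_weight`). Conversely every such weight gives a feasible
function (`upSum_mem`). So `F` is a simplex whose vertices are the indicators of `{R | R ⊆ S₀}`
with `|S₀| = N`.

An extreme `lam` is identified by perturbing it along the segment towards the indicator of a
set charged by `μ`. In the other direction, an indicator is extreme because feasible functions
take values in `[0, 1]`.
-/

open Finset

/-- The feasible region `F` of the `N`-th relaxation. -/
def FeasibleSet {V : Type*} [Fintype V] [DecidableEq V] (N : ℕ) :
    Set (Finset V → ℝ) :=
  {lam | (∀ S : Finset V, 2 * N < S.card → lam S = 0) ∧
    (∀ S : Finset V, 0 ≤ lam S) ∧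
    (∀ i : ℕ, i ≤ 2 * N →
      ∑ S ∈ Finset.univ.filter (fun S : Finset V => S.card = i), lam S
        = (N.choose i : ℝ)) ∧
    (momentMatrix N lam).PosSemidef}

/-- The upward sum (zeta transform) of `μ`: `upSum μ S = ∑_{T ⊇ S} μ T`. -/
def upSum {V : Type*} [Fintype V] [DecidableEq V] (μ : Finset V → ℝ) (S : Finset V) : ℝ :=
  ∑ T : Finset V, if S ⊆ T then μ T else 0

section

variable {V : Type*} [Fintype V] [DecidableEq V]

/-- The alternating sum over an interval `[S, R]` of the subset lattice vanishes unless `S = R`. -/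
lemma alternating_sum_interval (S R : Finset V) :
    (∑ T : Finset V, if S ⊆ T ∧ T ⊆ R then (-1 : ℝ) ^ #T else 0) =
      if S = R then (-1 : ℝ) ^ #S else 0 := by
  by_cases hSR : S ⊆ R
  · have hfilter : (Finset.univ.filter fun T : Finset V => S ⊆ T ∧ T ⊆ R) = Finset.Icc S R := by
      ext T; simp
    rw [← Finset.sum_filter, hfilter, Finset.Icc_eq_image_powerset hSR, Finset.sum_image]
    · have hcard : ∀ T ∈ (R \ S).powerset,
          (-1 : ℝ) ^ #(S ∪ T) = (-1) ^ #S * (((-1 : ℤ) ^ #T : ℤ) : ℝ) := by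
        intro T hT
        have hdisj : Disjoint S T :=
          Finset.disjoint_of_subset_right (Finset.mem_powerset.1 hT) Finset.disjoint_sdiff
        rw [Finset.card_union_of_disjoint hdisj, pow_add]
        push_cast
        rfl
      rw [Finset.sum_congr rfl hcard, ← Finset.mul_sum, ← Int.cast_sum,
        Finset.sum_powerset_neg_one_pow_card]
      by_cases h : S = R
      · simp [h]
      · have hne : R \ S ≠ ∅ := fun h0 =>
          h (Finset.Subset.antisymm hSR (Finset.sdiff_eq_empty_iff_subset.1 h0))
        simp [h, hne]
    · intro A hA B hB hAB
      have hA' : Disjoint S A :=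
        Finset.disjoint_of_subset_right (Finset.mem_powerset.1 hA) Finset.disjoint_sdiff
      have hB' : Disjoint S B :=
        Finset.disjoint_of_subset_right (Finset.mem_powerset.1 hB) Finset.disjoint_sdiff
      have hAB' : S ∪ A = S ∪ B := hAB
      rw [← Finset.union_sdiff_cancel_left hA', hAB', Finset.union_sdiff_cancel_left hB']
  · have hne : S ≠ R := fun h => hSR (h ▸ Finset.Subset.refl _)
    rw [if_neg hne]
    refine Finset.sum_eq_zero fun T _ => if_neg fun h => hSR (h.1.trans h.2)

/-- Möbius inversion. The sign `(-1)^(|T| + |R|)` equals `(-1)^|R \ T|` for `T ⊆ R`, without a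
truncated subtraction. -/
lemma upSum_moebius (lam : Finset V → ℝ) (S : Finset V) :
    upSum (fun T => ∑ R : Finset V, if T ⊆ R then (-1 : ℝ) ^ (#T + #R) * lam R else 0) S
      = lam S := by
  have hterm : ∀ T : Finset V,
      (if S ⊆ T then ∑ R : Finset V, (if T ⊆ R then (-1 : ℝ) ^ (#T + #R) * lam R else 0) else 0) =
      ∑ R : Finset V, (if S ⊆ T ∧ T ⊆ R then (-1 : ℝ) ^ #T else 0) * ((-1) ^ #R * lam R) := by
    intro T
    by_cases h : S ⊆ T
    · simp only [h, if_true, true_and]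
      refine Finset.sum_congr rfl fun R _ => ?_
      split_ifs
      · rw [pow_add]; ring
      · ring
    · simp [h]
  unfold upSum
  rw [Finset.sum_congr rfl fun T _ => hterm T, Finset.sum_comm]
  simp_rw [← Finset.sum_mul, alternating_sum_interval]
  rw [Finset.sum_eq_single S]
  · rw [if_pos rfl, ← mul_assoc, ← mul_pow]
    norm_num
  · intro R _ hR
    rw [if_neg (Ne.symm hR), zero_mul]
  · simp

/-- In terms of the Möbius inverse, the moment matrix is diagonalised by the zeta matrix. -/
lemma sum_sum_upSum (N : ℕ) (μ : Finset V → ℝ) (x : {J : Finset V // #J ≤ N} → ℝ) :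
    ∑ J, ∑ J', x J * upSum μ (J.1 ∪ J'.1) * x J' =
      ∑ T : Finset V, μ T * (∑ J, if J.1 ⊆ T then x J else 0) ^ 2 := by
  have hexpand : ∀ T : Finset V, μ T * (∑ J, if J.1 ⊆ T then x J else 0) ^ 2 =
      ∑ J, ∑ J', x J * (if J.1 ∪ J'.1 ⊆ T then μ T else 0) * x J' := by
    intro T
    rw [sq, Finset.sum_mul_sum, Finset.mul_sum]
    refine Finset.sum_congr rfl fun J _ => ?_
    rw [Finset.mul_sum]
    refine Finset.sum_congr rfl fun J' _ => ?_
    simp only [Finset.union_subset_iff]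
    by_cases h : J.1 ⊆ T <;> by_cases h' : J'.1 ⊆ T <;> simp [h, h']
    ring
  rw [Finset.sum_congr rfl fun T _ => hexpand T]
  symm
  rw [Finset.sum_comm]
  refine Finset.sum_congr rfl fun J _ => ?_
  rw [Finset.sum_comm]
  refine Finset.sum_congr rfl fun J' _ => ?_
  rw [upSum, Finset.mul_sum, Finset.sum_mul]

lemma sum_card_upSum (μ : Finset V → ℝ) (i : ℕ) :
    ∑ S ∈ Finset.univ.filter (fun S : Finset V => #S = i), upSum μ S =
      ∑ T : Finset V, μ T * ((#T).choose i : ℝ) := by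
  unfold upSum
  rw [Finset.sum_comm]
  refine Finset.sum_congr rfl fun T _ => ?_
  have hfilter : ((Finset.univ.filter fun S : Finset V => #S = i).filter fun S => S ⊆ T) =
      Finset.powersetCard i T := by
    ext S; simp [Finset.mem_powersetCard, and_comm]
  rw [← Finset.sum_filter, hfilter, Finset.sum_const, Finset.card_powersetCard, nsmul_eq_mul,
    mul_comm]

lemma upSum_nonneg {μ : Finset V → ℝ} (h0 : ∀ T, 0 ≤ μ T) (S : Finset V) : 0 ≤ upSum μ S :=
  Finset.sum_nonneg fun T _ => by split_ifs <;> simp [h0]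

lemma posSemidef_iff_quadratic {n : Type*} [Fintype n] {M : Matrix n n ℝ} :
    M.PosSemidef ↔ M.IsHermitian ∧ ∀ x : n → ℝ, 0 ≤ ∑ i, ∑ j, x i * M i j * x j := by
  rw [Matrix.posSemidef_iff_dotProduct_mulVec]
  simp only [dotProduct, Matrix.mulVec, Finset.mul_sum, star_trivial, mul_assoc]

/-- A probability weight on the `N`-subsets has a feasible upward sum. -/
lemma upSum_mem (N : ℕ) {μ : Finset V → ℝ} (h0 : ∀ T, 0 ≤ μ T)
    (hN : ∀ T, #T ≠ N → μ T = 0) (h1 : ∑ T, μ T = 1) :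
    upSum μ ∈ FeasibleSet (V := V) N := by
  refine ⟨fun S hS => ?_, upSum_nonneg h0, fun i _ => ?_, ?_⟩
  · refine Finset.sum_eq_zero fun T _ => ?_
    split_ifs with h
    · have := Finset.card_le_card h
      exact hN T (by omega)
    · rfl
  · rw [sum_card_upSum]
    calc ∑ T : Finset V, μ T * ((#T).choose i : ℝ) = ∑ T : Finset V, μ T * (N.choose i : ℝ) := by
          refine Finset.sum_congr rfl fun T _ => ?_
          by_cases h : #T = N
          · rw [h]
          · rw [hN T h]; simp
      _ = N.choose i := by rw [← Finset.sum_mul, h1, one_mul]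
  · rw [posSemidef_iff_quadratic]
    refine ⟨?_, fun x => ?_⟩
    · ext J J'
      simp [momentMatrix, Finset.union_comm]
    · have := sum_sum_upSum N μ x
      unfold momentMatrix
      rw [this]
      exact Finset.sum_nonneg fun T _ => mul_nonneg (h0 T) (sq_nonneg _)

/-- Every feasible function is the upward sum of a probability weight on the `N`-subsets. -/
lemma exists_weight {N : ℕ} {lam : Finset V → ℝ} (hlam : lam ∈ FeasibleSet (V := V) N) :
    ∃ μ : Finset V → ℝ, (∀ T, 0 ≤ μ T) ∧ (∀ T, #T ≠ N → μ T = 0) ∧ ∑ T, μ T = 1 ∧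
      lam = upSum μ := by
  obtain ⟨hbig, hnn, hsum, hpsd⟩ := hlam
  have hvanish : ∀ S : Finset V, N < #S → lam S = 0 := by
    intro S hS
    by_cases h2 : 2 * N < #S
    · exact hbig S h2
    · have hs := hsum #S (by omega)
      rw [Nat.choose_eq_zero_of_lt hS, Nat.cast_zero,
        Finset.sum_eq_zero_iff_of_nonneg fun S _ => hnn S] at hs
      exact hs S (by simp)
  obtain ⟨μ, hμ⟩ : ∃ μ : Finset V → ℝ, μ =
      fun T => ∑ R : Finset V, if T ⊆ R then (-1 : ℝ) ^ (#T + #R) * lam R else 0 := ⟨_, rfl⟩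
  have hrep : lam = upSum μ := by
    funext S
    rw [hμ, upSum_moebius]
  have hμbig : ∀ T : Finset V, N < #T → μ T = 0 := by
    intro T hT
    rw [hμ]
    refine Finset.sum_eq_zero fun R _ => ?_
    split_ifs with h
    · rw [hvanish R (hT.trans_le (Finset.card_le_card h)), mul_zero]
    · rfl
  have hμnn : ∀ T, 0 ≤ μ T := by
    intro T
    by_cases hT : N < #T
    · exact (hμbig T hT).ge
    have hq := (posSemidef_iff_quadratic.1 hpsd).2 fun J => if T ⊆ J.1 then (-1 : ℝ) ^ #J.1 else 0
    unfold momentMatrix at hq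
    rw [hrep, sum_sum_upSum] at hq
    have hterm : ∀ U : Finset V, μ U * (∑ J : {J : Finset V // #J ≤ N},
        if J.1 ⊆ U then (if T ⊆ J.1 then (-1 : ℝ) ^ #J.1 else 0) else 0) ^ 2 =
        if T = U then μ T else 0 := by
      intro U
      by_cases hU : N < #U
      · rw [hμbig U hU, zero_mul]
        split_ifs with h
        · rw [h, hμbig U hU]
        · rfl
      -- For `|U| ≤ N` every `J ⊆ U` is an index of the moment matrix, so the inner sum is the
      -- full alternating sum over the interval `[T, U]`.
      · have hinner : (∑ J : {J : Finset V // #J ≤ N},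
            if J.1 ⊆ U then (if T ⊆ J.1 then (-1 : ℝ) ^ #J.1 else 0) else 0) =
            ∑ J : Finset V, if T ⊆ J ∧ J ⊆ U then (-1 : ℝ) ^ #J else 0 := by
          have hsub := Finset.sum_subtype (F := inferInstance) (Finset.univ.filter fun J : Finset V => #J ≤ N)
            (p := fun J : Finset V => #J ≤ N) (by simp)
            (fun J : Finset V => if J ⊆ U then (if T ⊆ J then (-1 : ℝ) ^ #J else 0) else 0)
          rw [← hsub, Finset.sum_filter]
          refine Finset.sum_congr rfl fun J _ => ?_
          by_cases hJ : J ⊆ U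
          · have hJN : #J ≤ N := (Finset.card_le_card hJ).trans (not_lt.1 hU)
            simp [hJ, hJN]
          · simp [hJ]
        rw [hinner, alternating_sum_interval]
        split_ifs with h
        · rw [← pow_mul, mul_comm #T 2, pow_mul, h]; norm_num
        · simp
    rw [Finset.sum_congr rfl fun U _ => hterm U, Finset.sum_ite_eq] at hq
    simpa using hq
  have h1 : ∑ T, μ T = 1 := by
    have hs := hsum 0 (by omega)
    rw [hrep, sum_card_upSum] at hs
    simpa using hs
  refine ⟨μ, hμnn, fun T hT => ?_, h1, hrep⟩
  have hs := hsum N (by omega)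
  rw [hrep, sum_card_upSum, Nat.choose_self, Nat.cast_one] at hs
  have hdiff : ∑ U : Finset V, μ U * (1 - ((#U).choose N : ℝ)) = 0 := by
    simp_rw [mul_sub, mul_one]
    rw [Finset.sum_sub_distrib, h1, hs, sub_self]
  rw [Finset.sum_eq_zero_iff_of_nonneg] at hdiff
  · rcases lt_or_gt_of_ne hT with h | h
    · have := hdiff T (Finset.mem_univ _)
      rwa [Nat.choose_eq_zero_of_lt h, Nat.cast_zero, sub_zero, mul_one] at this
    · exact hμbig T h
  · intro U _
    rcases lt_trichotomy #U N with h | h | h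
    · simp [Nat.choose_eq_zero_of_lt h, hμnn U]
    · simp [h]
    · simp [hμbig U h]

lemma upSum_le_one {μ : Finset V → ℝ} (h0 : ∀ T, 0 ≤ μ T) (h1 : ∑ T, μ T = 1) (S : Finset V) :
    upSum μ S ≤ 1 := by
  rw [← h1]
  refine Finset.sum_le_sum fun T _ => ?_
  split_ifs
  · exact le_rfl
  · exact h0 T

lemma upSum_combination (a b : ℝ) (μ : Finset V → ℝ) (S₀ R : Finset V) :
    upSum (fun T => a * μ T + b * if T = S₀ then 1 else 0) R =
      a * upSum μ R + b * if R ⊆ S₀ then 1 else 0 := by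
  have hterm : ∀ T : Finset V, (if R ⊆ T then a * μ T + b * (if T = S₀ then 1 else 0) else 0) =
      a * (if R ⊆ T then μ T else 0) + if T = S₀ then (b * if R ⊆ S₀ then 1 else 0) else 0 := by
    intro T
    by_cases h : T = S₀
    · subst h
      split_ifs <;> ring
    · simp [h]
  unfold upSum
  rw [Finset.sum_congr rfl fun T _ => hterm T, Finset.sum_add_distrib, ← Finset.mul_sum,
    Finset.sum_ite_eq']
  simp

end

/-- `lam ∈ F` is an extreme point of `F` if and only if there is an
`S₀ ⊆ V` with `|S₀| = N` such that `lam R = 1` for `R ⊆ S₀` and `lam R = 0`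
for `R ⊄ S₀`. -/
theorem stmt_3 {V : Type*} [Fintype V] [DecidableEq V] (N : ℕ)
    (hN1 : 1 ≤ N) (hN2 : N ≤ Fintype.card V)
    (lam : Finset V → ℝ) (hlam : lam ∈ FeasibleSet (V := V) N) :
    (∀ lam₁ ∈ FeasibleSet (V := V) N, ∀ lam₂ ∈ FeasibleSet (V := V) N,
        (∀ R : Finset V, lam R = (lam₁ R + lam₂ R) / 2) → lam₁ = lam₂) ↔
    ∃ S₀ : Finset V, S₀.card = N ∧
      (∀ R : Finset V, R ⊆ S₀ → lam R = 1) ∧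
      (∀ R : Finset V, ¬ R ⊆ S₀ → lam R = 0) := by
  constructor
  · intro hext
    obtain ⟨μ, h0, hN, h1, rfl⟩ := exists_weight hlam
    obtain ⟨S₀, hS₀⟩ : ∃ S₀, μ S₀ ≠ 0 := by
      by_contra! h
      simp [h] at h1
    have hcard : #S₀ = N := by
      by_contra h
      exact hS₀ (hN S₀ h)
    have hpos : 0 < μ S₀ := lt_of_le_of_ne (h0 S₀) (Ne.symm hS₀)
    have hle : μ S₀ ≤ 1 := h1 ▸ Finset.single_le_sum (fun T _ => h0 T) (Finset.mem_univ S₀)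
    have hmem : ∀ a b : ℝ, a + b = 1 → 0 ≤ a → 0 ≤ a * μ S₀ + b →
        upSum (fun T => a * μ T + b * if T = S₀ then 1 else 0) ∈ FeasibleSet (V := V) N := by
      intro a b hab ha hb
      refine upSum_mem N (fun T => ?_) (fun T hT => ?_) ?_
      · by_cases h : T = S₀
        · simpa [h] using hb
        · simpa [h] using mul_nonneg ha (h0 T)
      · have h : T ≠ S₀ := fun h => hT (h ▸ hcard)
        simp [h, hN T hT]
      · rw [Finset.sum_add_distrib, ← Finset.mul_sum, h1]
        simpa using hab
    -- With `ε = μ S₀`, move from `lam` by `±ε` times the difference to the indicator of `S₀`;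
    -- the backward step leaves weight `(1 + ε) ε - ε = ε²` on `S₀`.
    have heq := hext _ (hmem (1 - μ S₀) (μ S₀) (by ring) (by linarith) (by nlinarith))
      _ (hmem (1 + μ S₀) (-μ S₀) (by ring) (by linarith) (by nlinarith)) (fun R => by
        rw [upSum_combination, upSum_combination]; ring)
    have hval : ∀ R, upSum μ R = if R ⊆ S₀ then 1 else 0 := by
      intro R
      have hR := congrFun heq R
      rw [upSum_combination, upSum_combination] at hR
      exact mul_left_cancel₀ hS₀ (by linarith)
    exact ⟨S₀, hcard, fun R hR => by rw [hval, if_pos hR], fun R hR => by rw [hval, if_neg hR]⟩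
  · rintro ⟨S₀, -, hin, hout⟩ lam₁ hlam₁ lam₂ hlam₂ havg
    obtain ⟨μ₁, h0₁, -, h1₁, rfl⟩ := exists_weight hlam₁
    obtain ⟨μ₂, h0₂, -, h1₂, rfl⟩ := exists_weight hlam₂
    funext R
    have hR := havg R
    have hle₁ := upSum_le_one h0₁ h1₁ R
    have hle₂ := upSum_le_one h0₂ h1₂ R
    have hnn₁ := upSum_nonneg h0₁ R
    have hnn₂ := upSum_nonneg h0₂ R
    by_cases h : R ⊆ S₀
    · rw [hin R h] at hR
      linarith
    · rw [hout R h] at hR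
      linarith
end

section
/- Let Γ be a finite group acting linearly on ℝⁿ through a group homomorphism ρ : Γ → GLₙ(ℝ), inducing the action (γ·p)(x) = p(ρ(γ)⁻¹ x) on real polynomials p in n variables. Let g₁,…,g_m ∈ ℝ[x₁,…,xₙ], set g₀ = 1, fix δ ∈ ℕ, and set hᵢ = ⌊(δ − deg gᵢ)/2⌋ for i = 0,…,m. Assume the set {g₁,…,g_m} is Γ-invariant, i.e., for every γ ∈ Γ there is a permutation σ of {1,…,m} with γ·gᵢ = g_{σ(i)} for all i. Let p ∈ ℝ[x₁,…,xₙ] be Γ-invariant (γ·p = p for all γ ∈ Γ) and suppose p = Σ_{i=0}^{m} gᵢ sᵢ for some sum-of-squares polynomials sᵢ of degree at most 2hᵢ. Then there exist sum-of-squares polynomials s̄₀,…,s̄_m with deg s̄ᵢ ≤ 2hᵢ such that p = Σ_{i=0}^{m} gᵢ s̄ᵢ and each s̄ᵢ is invariant under the stabilizer Γᵢ = {γ ∈ Γ : γ·gᵢ = gᵢ} (γ·s̄ᵢ = s̄ᵢ for all γ ∈ Γᵢ). -/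
/-!
Average the given representation over `Γ`. Since `p` is invariant,
`p = |Γ|⁻¹ ∑_γ (γ·s₀ + ∑_j (γ·g_j) (γ·s_j))`. Every `γ·g_j` occurs among the `g_i`, so the
term `(γ·g_j) (γ·s_j)` can be shared out equally between all indices `i` with `g_i = γ·g_j`
(the `g_i` need not be distinct). Collecting the coefficients of `g_i` gives the weight
`t_i = |Γ|⁻¹ N_i⁻¹ ∑_{(γ, j) : γ·g_j = g_i} γ·s_j`, where `N_i` is the number of indices `k`
with `g_k = g_i`. It is a nonnegative combination of sums of squares. Its degree bound comes
from `deg (γ·q) = deg q`. If `η` fixes `g_i`, then `γ·g_j = g_i` is equivalent to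
`(ηγ)·g_j = g_i`, so `η` merely permutes the summands of `t_i`.
-/

/-- The action of `γ ∈ Γ` on polynomials induced by a linear action `ρ : Γ → GLₙ(ℝ)`
on `ℝⁿ`: `(γ · p)(x) = p (ρ(γ)⁻¹ x)`. -/
noncomputable def polyAct {Γ : Type*} [Group Γ] {n : ℕ}
    (ρ : Γ →* Matrix.GeneralLinearGroup (Fin n) ℝ) (γ : Γ)
    (p : MvPolynomial (Fin n) ℝ) : MvPolynomial (Fin n) ℝ :=
  MvPolynomial.aeval (fun i : Fin n =>
    ∑ j : Fin n, MvPolynomial.C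
      ((((ρ γ)⁻¹ : Matrix.GeneralLinearGroup (Fin n) ℝ) : Matrix (Fin n) (Fin n) ℝ) i j)
      * MvPolynomial.X j) p

/-- A polynomial is a sum of squares. -/
def IsSOS {n : ℕ} (s : MvPolynomial (Fin n) ℝ) : Prop :=
  ∃ (k : ℕ) (q : Fin k → MvPolynomial (Fin n) ℝ), s = ∑ i, (q i) ^ 2

open MvPolynomial Finset

/-- `polyAct ρ γ` as an algebra homomorphism. -/
noncomputable def polyActHom {Γ : Type*} [Group Γ] {n : ℕ}
    (ρ : Γ →* Matrix.GeneralLinearGroup (Fin n) ℝ) (γ : Γ) :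
    MvPolynomial (Fin n) ℝ →ₐ[ℝ] MvPolynomial (Fin n) ℝ :=
  aeval (fun i : Fin n =>
    ∑ j : Fin n, C
      ((((ρ γ)⁻¹ : Matrix.GeneralLinearGroup (Fin n) ℝ) : Matrix (Fin n) (Fin n) ℝ) i j)
      * X j)

section Action

variable {Γ : Type*} [Group Γ] {n : ℕ} (ρ : Γ →* Matrix.GeneralLinearGroup (Fin n) ℝ)

lemma polyAct_eq_hom (γ : Γ) (p : MvPolynomial (Fin n) ℝ) :
    polyAct ρ γ p = polyActHom ρ γ p := rfl

lemma polyActHom_mul (a b : Γ) (p : MvPolynomial (Fin n) ℝ) :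
    polyActHom ρ (a * b) p = polyActHom ρ a (polyActHom ρ b p) := by
  suffices h : polyActHom ρ (a * b) = (polyActHom ρ a).comp (polyActHom ρ b) by
    rw [h, AlgHom.comp_apply]
  refine algHom_ext fun i => ?_
  simp only [polyActHom, AlgHom.comp_apply, aeval_X, map_mul, map_sum, mul_inv_rev, Units.val_mul,
    Matrix.mul_apply, algHom_C, algebraMap_eq, Finset.sum_mul, Finset.mul_sum, mul_assoc]
  rw [Finset.sum_comm]

lemma polyActHom_one (p : MvPolynomial (Fin n) ℝ) : polyActHom ρ 1 p = p := by
  suffices h : polyActHom ρ 1 = AlgHom.id ℝ _ by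
    rw [h, AlgHom.id_apply]
  refine algHom_ext fun i => ?_
  simp [polyActHom, Matrix.one_apply]

lemma polyActHom_injective (γ : Γ) : Function.Injective (polyActHom ρ γ) := by
  intro p q h
  rw [← polyActHom_one ρ p, ← polyActHom_one ρ q, ← inv_mul_cancel γ, polyActHom_mul,
    polyActHom_mul, h]

lemma totalDegree_polyActHom_le (γ : Γ) (p : MvPolynomial (Fin n) ℝ) :
    (polyActHom ρ γ p).totalDegree ≤ p.totalDegree := by
  rw [polyActHom, aeval_def, eval₂_eq]
  refine totalDegree_finsetSum_le fun d hd => ?_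
  have hX (i : Fin n) : (∑ j : Fin n, C
      ((((ρ γ)⁻¹ : Matrix.GeneralLinearGroup (Fin n) ℝ) : Matrix (Fin n) (Fin n) ℝ) i j)
      * X j : MvPolynomial (Fin n) ℝ).totalDegree ≤ 1 :=
    totalDegree_finsetSum_le fun j _ => by
      refine (totalDegree_mul _ _).trans ?_
      simp
  refine (totalDegree_mul _ _).trans ?_
  rw [algebraMap_eq, totalDegree_C, zero_add]
  refine (totalDegree_finsetProd _ _).trans ?_
  refine le_trans (Finset.sum_le_sum fun i _ => (totalDegree_pow _ _).trans
    (Nat.mul_le_mul_left (d i) (hX i))) ?_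
  simpa [Finsupp.sum] using le_totalDegree hd

lemma totalDegree_polyActHom (γ : Γ) (p : MvPolynomial (Fin n) ℝ) :
    (polyActHom ρ γ p).totalDegree = p.totalDegree := by
  refine le_antisymm (totalDegree_polyActHom_le ρ γ p) ?_
  have h := totalDegree_polyActHom_le ρ γ⁻¹ (polyActHom ρ γ p)
  rwa [← polyActHom_mul, inv_mul_cancel, polyActHom_one] at h

end Action

section SumOfSquares

variable {n : ℕ}

lemma isSOS_zero : IsSOS (0 : MvPolynomial (Fin n) ℝ) := ⟨0, Fin.elim0, by simp⟩

lemma IsSOS.add {a b : MvPolynomial (Fin n) ℝ} (ha : IsSOS a) (hb : IsSOS b) :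
    IsSOS (a + b) := by
  obtain ⟨k, q, rfl⟩ := ha
  obtain ⟨l, r, rfl⟩ := hb
  exact ⟨k + l, Fin.append q r, by simp [Fin.sum_univ_add]⟩

lemma IsSOS.sum {ι : Type*} {S : Finset ι} {f : ι → MvPolynomial (Fin n) ℝ}
    (h : ∀ i ∈ S, IsSOS (f i)) : IsSOS (∑ i ∈ S, f i) :=
  Finset.sum_induction f IsSOS (fun _ _ => IsSOS.add) isSOS_zero h

lemma IsSOS.C_mul {a : MvPolynomial (Fin n) ℝ} (ha : IsSOS a) {c : ℝ} (hc : 0 ≤ c) :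
    IsSOS (C c * a) := by
  obtain ⟨k, q, rfl⟩ := ha
  refine ⟨k, fun i => C (√c) * q i, ?_⟩
  simp only [mul_pow, ← C_pow, Real.sq_sqrt hc, Finset.mul_sum]

lemma IsSOS.map {a : MvPolynomial (Fin n) ℝ} (ha : IsSOS a)
    (f : MvPolynomial (Fin n) ℝ →ₐ[ℝ] MvPolynomial (Fin n) ℝ) : IsSOS (f a) := by
  obtain ⟨k, q, rfl⟩ := ha
  exact ⟨k, fun i => f (q i), by simp⟩

lemma totalDegree_C_mul_le (c : ℝ) (a : MvPolynomial (Fin n) ℝ) :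
    (C c * a).totalDegree ≤ a.totalDegree :=
  (totalDegree_mul _ _).trans (by simp)

end SumOfSquares

/-- Symmetrized Putinar representation. If a `Γ`-invariant polynomial `p`
has a degree-truncated quadratic module representation `p = s₀ + ∑ᵢ gᵢ sᵢ` with
sum-of-squares weights `sᵢ` of degree at most `2hᵢ` (where `h₀ = ⌊δ/2⌋` and
`hᵢ = ⌊(δ - deg gᵢ)/2⌋`), and the set `{g₁, …, g_m}` is `Γ`-invariant, then there is
such a representation in which `s₀` is `Γ`-invariant and each `sᵢ` is invariant under
the stabilizer of `gᵢ`. -/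
theorem stmt_16 {Γ : Type*} [Group Γ] [Fintype Γ] {n m : ℕ}
    (ρ : Γ →* Matrix.GeneralLinearGroup (Fin n) ℝ)
    (g : Fin m → MvPolynomial (Fin n) ℝ) (δ : ℕ)
    (hgset : ∀ γ : Γ, ∃ σ : Equiv.Perm (Fin m), ∀ i, polyAct ρ γ (g i) = g (σ i))
    (p : MvPolynomial (Fin n) ℝ) (hpinv : ∀ γ : Γ, polyAct ρ γ p = p)
    (s₀ : MvPolynomial (Fin n) ℝ) (s : Fin m → MvPolynomial (Fin n) ℝ)
    (hs₀sos : IsSOS s₀) (hssos : ∀ i, IsSOS (s i))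
    (hs₀deg : s₀.totalDegree ≤ 2 * (δ / 2))
    (hsdeg : ∀ i, (s i).totalDegree ≤ 2 * ((δ - (g i).totalDegree) / 2))
    (hrep : p = s₀ + ∑ i, g i * s i) :
    ∃ (t₀ : MvPolynomial (Fin n) ℝ) (t : Fin m → MvPolynomial (Fin n) ℝ),
      IsSOS t₀ ∧ (∀ i, IsSOS (t i)) ∧
      t₀.totalDegree ≤ 2 * (δ / 2) ∧
      (∀ i, (t i).totalDegree ≤ 2 * ((δ - (g i).totalDegree) / 2)) ∧
      p = t₀ + ∑ i, g i * t i ∧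
      (∀ γ : Γ, polyAct ρ γ t₀ = t₀) ∧
      (∀ i, ∀ γ : Γ, polyAct ρ γ (g i) = g i → polyAct ρ γ (t i) = t i) := by
  classical
  simp only [polyAct_eq_hom] at hgset hpinv ⊢
  set c : ℝ := (Fintype.card Γ : ℝ)⁻¹ with hc
  have hc0 : 0 ≤ c := by positivity
  have hcard : c * (Fintype.card Γ : ℝ) = 1 := inv_mul_cancel₀ (by simp)
  -- `w q` is the share of each index `i` with `g i = q` in a term with factor `q`.
  let w : MvPolynomial (Fin n) ℝ → ℝ := fun q => (#{k | g k = q} : ℝ)⁻¹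
  have hw0 (q) : 0 ≤ w q := by positivity
  let P : Fin m → Finset (Γ × Fin m) := fun i => {x | polyActHom ρ x.1 (g x.2) = g i}
  refine ⟨C c * ∑ γ, polyActHom ρ γ s₀,
    fun i => C (c * w (g i)) * ∑ x ∈ P i, polyActHom ρ x.1 (s x.2),
    (IsSOS.sum fun γ _ => hs₀sos.map _).C_mul hc0,
    fun i => (IsSOS.sum fun x _ => (hssos x.2).map _).C_mul (mul_nonneg hc0 (hw0 _)),
    ?_, fun i => ?_, ?_, fun γ => ?_, fun i γ hγ => ?_⟩
  · refine (totalDegree_C_mul_le _ _).trans (totalDegree_finsetSum_le fun γ _ => ?_)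
    rwa [totalDegree_polyActHom]
  · refine (totalDegree_C_mul_le _ _).trans (totalDegree_finsetSum_le fun x hx => ?_)
    have hx' : polyActHom ρ x.1 (g x.2) = g i := by simpa [P] using hx
    rw [totalDegree_polyActHom, ← hx', totalDegree_polyActHom]
    exact hsdeg x.2
  · -- The shares of the indices `i` with `g i = γ·g j` add up to the whole term.
    have hshare (γ : Γ) (j : Fin m) :
        (∑ i, if polyActHom ρ γ (g j) = g i then
          g i * (C (w (g i)) * polyActHom ρ γ (s j)) else 0) = polyActHom ρ γ (g j * s j) := by
      obtain ⟨σ, hσ⟩ := hgset γ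
      have hne : (#{k | g k = polyActHom ρ γ (g j)} : ℝ) ≠ 0 := by
        rw [Nat.cast_ne_zero, Finset.card_ne_zero]
        exact ⟨σ j, by simp [hσ]⟩
      set q := polyActHom ρ γ (g j) with hq
      have h1 : ∀ i, (if q = g i then g i * (C (w (g i)) * polyActHom ρ γ (s j)) else 0) =
          if g i = q then q * (C (w q) * polyActHom ρ γ (s j)) else 0 := by
        intro i
        by_cases h : g i = q
        · simp [h]
        · simp [h, Ne.symm h]
      rw [Finset.sum_congr rfl fun i _ => h1 i, ← Finset.sum_filter, Finset.sum_const, map_mul,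
        ← hq, nsmul_eq_mul, ← map_natCast (C : ℝ →+* MvPolynomial (Fin n) ℝ)]
      have h2 : C (#{k | g k = q} : ℝ) * C (w q) = (1 : MvPolynomial (Fin n) ℝ) := by
        rw [← C_mul, mul_inv_cancel₀ hne, C_1]
      linear_combination (q * polyActHom ρ γ (s j)) * h2
    have havg : p = C c * ∑ γ, polyActHom ρ γ p := by
      simp only [hpinv, Finset.sum_const, Finset.card_univ, nsmul_eq_mul]
      rw [← map_natCast (C : ℝ →+* MvPolynomial (Fin n) ℝ), ← mul_assoc, ← C_mul, hcard, C_1,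
        one_mul]
    have hsum : ∑ i, g i * (C (c * w (g i)) * ∑ x ∈ P i, polyActHom ρ x.1 (s x.2)) =
        C c * ∑ γ, ∑ j, polyActHom ρ γ (g j * s j) := by
      simp only [← hshare]
      rw [← Fintype.sum_prod_type', Finset.sum_comm, Finset.mul_sum]
      refine Finset.sum_congr rfl fun i _ => ?_
      rw [← Finset.sum_filter, Finset.mul_sum, Finset.mul_sum, Finset.mul_sum]
      refine Finset.sum_congr rfl fun x _ => ?_
      rw [C_mul]
      ring
    rw [hsum, ← mul_add, ← Finset.sum_add_distrib]
    conv_lhs => rw [havg, hrep]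
    simp only [map_add, map_sum]
  · rw [map_mul, algHom_C, algebraMap_eq, map_sum]
    simp only [← polyActHom_mul]
    refine congrArg (HMul.hMul (C c)) ?_
    exact Fintype.sum_equiv (Equiv.mulLeft γ) _ (fun η => polyActHom ρ η s₀) fun η => rfl
  · rw [map_mul, algHom_C, algebraMap_eq, map_sum]
    simp only [← polyActHom_mul]
    refine congrArg (HMul.hMul (C (c * w (g i)))) ?_
    -- Left multiplication by `γ` permutes the index set `P i`, because `γ` fixes `g i`.
    refine Finset.sum_equiv ((Equiv.mulLeft γ).prodCongr (Equiv.refl _)) (fun x => ?_)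
      fun x _ => rfl
    have hiff : polyActHom ρ γ (polyActHom ρ x.1 (g x.2)) = g i ↔
        polyActHom ρ x.1 (g x.2) = g i := by
      conv_lhs => rw [← hγ]
      exact (polyActHom_injective ρ γ).eq_iff
    simp [P, polyActHom_mul, hiff]
end
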